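/- The number of permutations of {1,...,n} avoiding the Hertzsprung pattern 132 equals the sum over i from 0 to ⌊n/3⌋ of (-1)^i · (n-2i)! · C(n-2i, i). -/

import Mathlib

/-- A permutation (as a list) avoids the Hertzsprung pattern 132 if no three
consecutive entries are of the form b, b+2, b+1. -/
def Avoids132 (l : List ℕ) : Prop :=
  ∀ i < l.length,
    ¬ (l.getD (i+1) 0 = l.getD i 0 + 2 ∧ l.getD (i+2) 0 = l.getD i 0 + 1)

instance : DecidablePred Avoids132 := fun _ => Nat.decidableBallLT _ _

namespace H132

/-- the removed values -/
def R (B : Finset ℕ) (x : ℕ) : Prop := ∃ b ∈ B, x = b + 1 ∨ x = b + 2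

instance (B : Finset ℕ) : DecidablePred (R B) := fun x => by
  unfold R; infer_instance

def Good (n : ℕ) (B : Finset ℕ) : Prop :=
  ∀ b ∈ B, (1 ≤ b ∧ b + 2 ≤ n) ∧ (b + 1 ∉ B ∧ b + 2 ∉ B)

instance (n : ℕ) : DecidablePred (Good n) := fun B => by
  unfold Good; infer_instance

def G (n i : ℕ) : Finset (Finset ℕ) := ((Finset.range (n+1)).powerset).filter
  (fun B => Good n B ∧ B.card = i)

lemma mem_G {n i : ℕ} {B : Finset ℕ} : B ∈ G n i ↔ Good n B ∧ B.card = i := by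
  simp only [G, Finset.mem_filter, Finset.mem_powerset, and_iff_right_iff_imp]
  rintro ⟨h, -⟩ b hb
  have := h b hb
  simp; omega

lemma G_zero (n : ℕ) : G n 0 = {∅} := by
  ext B
  simp only [mem_G, Finset.card_eq_zero, Finset.mem_singleton]
  constructor
  · exact fun h => h.2
  · rintro rfl; simp [Good]

lemma G_small (n i : ℕ) (hn : n < 3) : G n (i+1) = ∅ := by
  ext B
  simp only [mem_G, Finset.notMem_empty, iff_false]
  rintro ⟨h, hc⟩
  obtain ⟨b, hb⟩ := Finset.card_pos.1 (by omega : 0 < B.card)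
  have := h b hb
  omega

lemma G_rec (n i : ℕ) : (G (n+3) (i+1)).card = (G (n+2) (i+1)).card + (G n i).card := by
  have h : G (n+3) (i+1) = G (n+2) (i+1) ∪ (G n i).image (insert (n+1)) := by
    ext B
    simp only [mem_G, Finset.mem_union, Finset.mem_image]
    constructor
    · rintro ⟨h, hc⟩
      by_cases hb : n + 1 ∈ B
      · right
        refine ⟨B.erase (n+1), ⟨?_, ?_⟩, Finset.insert_erase hb⟩
        · intro b hb'
          rw [Finset.mem_erase] at hb'
          have h1 := h b hb'.2
          have : b + 1 ≠ n + 1 := by intro h; rw [h] at h1; tauto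
          have : b + 2 ≠ n + 1 := by intro h; rw [h] at h1; tauto
          simp only [Finset.mem_erase]
          refine ⟨⟨?_, ?_⟩, ?_⟩ <;> first | omega | tauto
        · rw [Finset.card_erase_of_mem hb]; omega
      · left
        refine ⟨?_, hc⟩
        intro b hb'
        have h1 := h b hb'
        have : b ≠ n + 1 := by rintro rfl; exact hb hb'
        exact ⟨by omega, h1.2⟩
    · rintro (⟨h, hc⟩ | ⟨C, ⟨h, hc⟩, rfl⟩)
      · exact ⟨fun b hb => ⟨by have := h b hb; omega, (h b hb).2⟩, hc⟩
      · have hn : n + 1 ∉ C := fun hh => by have := h _ hh; omega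
        refine ⟨?_, by rw [Finset.card_insert_of_notMem hn, hc]⟩
        intro b hb
        simp only [Finset.mem_insert] at hb ⊢
        rcases hb with rfl | hb
        · have h1 : n + 1 + 1 ∉ C := fun hh => by have := h _ hh; omega
          have h2 : n + 1 + 2 ∉ C := fun hh => by have := h _ hh; omega
          refine ⟨by omega, ?_, ?_⟩ <;> rintro (h | h) <;> first | omega | tauto
        · have h1 := h b hb
          refine ⟨by omega, ?_, ?_⟩ <;> rintro (h | h) <;> first | omega | tauto
  rw [h, Finset.card_union_of_disjoint, Finset.card_image_of_injOn]
  · intro C hC D hD hCD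
    have hC := (mem_G.1 hC).1
    have hD := (mem_G.1 hD).1
    have h1 : n + 1 ∉ C := fun hh => by have := hC _ hh; omega
    have h2 : n + 1 ∉ D := fun hh => by have := hD _ hh; omega
    have := congrArg (fun s => Finset.erase s (n+1)) hCD
    simpa [Finset.erase_insert h1, Finset.erase_insert h2] using this
  · rw [Finset.disjoint_left]
    intro B hB hB'
    obtain ⟨C, -, rfl⟩ := Finset.mem_image.1 hB'
    have := (mem_G.1 hB).1 (n+1) (by simp)
    omega

lemma G_card (n i : ℕ) : (G n i).card = (n - 2 * i).choose i := by
  induction n using Nat.strong_induction_on generalizing i with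
  | _ n ih =>
    rcases i with _ | i
    · simp [G_zero]
    by_cases hn : n < 3
    · rw [G_small n i hn, show n - 2 * (i+1) = 0 by omega]; simp
    obtain ⟨m, rfl⟩ : ∃ m, n = m + 3 := ⟨n - 3, by omega⟩
    rw [G_rec, ih _ (by omega), ih _ (by omega)]
    by_cases hm : 2 * i ≤ m
    · rw [show m + 3 - 2 * (i+1) = (m - 2*i) + 1 by omega,
        show m + 2 - 2 * (i+1) = m - 2*i by omega, Nat.choose_succ_succ']
      omega
    · rw [show m + 3 - 2 * (i+1) = 0 by omega,
        show m + 2 - 2 * (i+1) = 0 by omega, show m - 2*i = 0 by omega]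
      obtain ⟨j, rfl⟩ : ∃ j, i = j + 1 := ⟨i - 1, by omega⟩
      simp

/-! ### Lists -/

def pat (b : ℕ) : List ℕ := [b, b+2, b+1]

lemma mem_of_pat {b : ℕ} {l : List ℕ} (h : pat b <:+: l) : b ∈ l ∧ b + 1 ∈ l ∧ b + 2 ∈ l := by
  have := h.subset
  simp [pat] at this
  tauto

lemma succ_unique {a c d : ℕ} {l : List ℕ} (hl : l.Nodup) (h1 : [a, c] <:+: l)
    (h2 : [a, d] <:+: l) : c = d := by
  induction l with
  | nil => simp at h1
  | cons x t ih =>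
    have e1 : a ∈ t ∨ a = x := by have := h1.subset (List.mem_cons_self); simp at this; tauto
    rw [List.nodup_cons] at hl
    rw [List.infix_cons_iff] at h1 h2
    by_cases hx : a = x
    · subst hx
      have k1 : ¬ [a, c] <:+: t := fun h => hl.1 (h.subset List.mem_cons_self)
      have k2 : ¬ [a, d] <:+: t := fun h => hl.1 (h.subset List.mem_cons_self)
      simp only [k1, k2, or_false, List.cons_prefix_cons, true_and] at h1 h2
      cases t with
      | nil => simp at h1
      | cons y s => simp [List.cons_prefix_cons] at h1 h2; omega
    · simp only [List.cons_prefix_cons, hx, false_and, false_or] at h1 h2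
      exact ih hl.2 h1 h2

lemma pred_unique {a b c : ℕ} {l : List ℕ} (hl : l.Nodup) (h1 : [a, c] <:+: l)
    (h2 : [b, c] <:+: l) : a = b := by
  refine succ_unique (l := l.reverse) (a := c) (List.nodup_reverse.2 hl) ?_ ?_
  · simpa using List.reverse_infix.2 h1
  · simpa using List.reverse_infix.2 h2

lemma pat_left {b : ℕ} {l : List ℕ} (h : pat b <:+: l) : [b, b+2] <:+: l :=
  List.IsInfix.trans ⟨[], [b+1], by simp [pat]⟩ h

lemma pat_right {b : ℕ} {l : List ℕ} (h : pat b <:+: l) : [b+2, b+1] <:+: l :=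
  List.IsInfix.trans ⟨[b], [], by simp [pat]⟩ h

lemma good_of_pat {n : ℕ} {B : Finset ℕ} {l : List ℕ} (hl : l.Perm (List.range' 1 n))
    (h : ∀ b ∈ B, pat b <:+: l) : Good n B := by
  have hnd : l.Nodup := hl.nodup_iff.2 List.nodup_range'
  intro b hb
  have h0 := h b hb
  have hm := mem_of_pat h0
  simp only [hl.mem_iff, List.mem_range'_1] at hm
  refine ⟨by omega, fun h1 => ?_, fun h1 => ?_⟩
  · have := pred_unique hnd (pat_left h0) (pat_right (h _ h1)); omega
  · have := succ_unique hnd (pat_right h0) (pat_left (h _ h1)); omega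

def ex1 (B : Finset ℕ) (x : ℕ) : List ℕ := if x ∈ B then pat x else [x]

def expand (B : Finset ℕ) (l : List ℕ) : List ℕ := l.flatMap (ex1 B)

def Sep (B : Finset ℕ) : Prop := ∀ b ∈ B, b + 1 ∉ B ∧ b + 2 ∉ B

def keep (B : Finset ℕ) (l : List ℕ) : List ℕ := l.filter (fun x => decide (¬ R B x))

lemma not_R {B : Finset ℕ} (hB : Sep B) {b : ℕ} (hb : b ∈ B) : ¬ R B b := by
  rintro ⟨c, hc, rfl | rfl⟩
  · exact (hB c hc).1 hb
  · exact (hB c hc).2 hb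

lemma keep_expand {B : Finset ℕ} (hB : Sep B) (m : List ℕ) (hm : ∀ x ∈ m, ¬ R B x) :
    keep B (expand B m) = m := by
  induction m with
  | nil => rfl
  | cons x t ih =>
    have ih := ih (fun y hy => hm y (List.mem_cons_of_mem _ hy))
    have hx := hm x List.mem_cons_self
    simp only [keep, expand, List.flatMap_cons, List.filter_append] at ih ⊢
    rw [ih]
    unfold ex1
    split_ifs with h
    · have h1 : R B (x+1) := ⟨x, h, Or.inl rfl⟩
      have h2 : R B (x+2) := ⟨x, h, Or.inr rfl⟩
      simp [pat, h1, h2, hx]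
    · simp [hx]

lemma expand_keep {B : Finset ℕ} (hB : Sep B) : ∀ (k : ℕ) (l : List ℕ), l.length ≤ k → l.Nodup →
    (∀ b ∈ B, b ∈ l → pat b <:+: l) → (∀ b ∈ B, (b + 1 ∈ l ∨ b + 2 ∈ l) → b ∈ l) →
    expand B (keep B l) = l := by
  intro k
  induction k with
  | zero =>
    intro l hl _ _ _
    have : l = [] := List.length_eq_zero_iff.1 (by omega)
    subst this; rfl
  | succ k ih =>
    intro l hlen hnd h1 h2
    rcases l with _ | ⟨x, t⟩
    · rfl
    have hxt := (List.nodup_cons.1 hnd).1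
    have key : ∀ b y s, b ≠ y → pat b <:+: y :: s → pat b <:+: s := by
      intro b y s hby h
      rw [List.infix_cons_iff] at h
      rcases h with h | h
      · simp [pat, List.cons_prefix_cons, hby] at h
      · exact h
    by_cases hx : x ∈ B
    · have hp := h1 x hx List.mem_cons_self
      rw [List.infix_cons_iff] at hp
      rcases hp with hp | hp
      swap
      · exact absurd (mem_of_pat hp).1 hxt
      obtain ⟨s, hs⟩ := hp
      simp only [pat, List.cons_append, List.nil_append, List.cons.injEq, true_and] at hs
      subst hs
      have hr1 : R B (x+1) := ⟨x, hx, Or.inl rfl⟩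
      have hr2 : R B (x+2) := ⟨x, hx, Or.inr rfl⟩
      have hr0 := not_R hB hx
      have hBx := hB x hx
      simp only [List.nodup_cons, List.mem_cons, not_or] at hnd
      have ihs := ih s (by simp at hlen; omega) hnd.2.2.2 ?_ ?_
      · have : keep B (x :: (x+2) :: (x+1) :: s) = x :: keep B s := by
          simp [keep, hr0, hr1, hr2]
        rw [this]
        simp only [expand, List.flatMap_cons] at ihs ⊢
        rw [ihs]
        simp [ex1, hx, pat]
      · intro b hb hbs
        have e0 : b ≠ x := by rintro rfl; tauto
        have e1 : b ≠ x + 1 := by rintro rfl; tauto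
        have e2 : b ≠ x + 2 := by rintro rfl; tauto
        exact key _ _ _ e1 (key _ _ _ e2 (key _ _ _ e0 (h1 b hb (by simp [hbs]))))
      · intro b hb hbs
        have e0 : b ≠ x := by rintro rfl; tauto
        have e1 : b ≠ x + 1 := by rintro rfl; tauto
        have e2 : b ≠ x + 2 := by rintro rfl; tauto
        have := h2 b hb (by simp only [List.mem_cons]; tauto)
        simp only [List.mem_cons] at this
        tauto
    · have hr : ¬ R B x := by
        rintro ⟨b, hb, hbx⟩
        have hbl := h2 b hb (by simp only [List.mem_cons]; omega)
        have := mem_of_pat (key _ _ _ (by omega) (h1 b hb hbl))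
        rcases hbx with rfl | rfl <;> tauto
      have iht := ih t (by simp at hlen; omega) (List.nodup_cons.1 hnd).2 ?_ ?_
      · have : keep B (x :: t) = x :: keep B t := by simp [keep, hr]
        rw [this]
        simp only [expand, List.flatMap_cons] at iht ⊢
        rw [iht]
        simp [ex1, hx]
      · intro b hb hbs
        have e0 : b ≠ x := by rintro rfl; tauto
        exact key _ _ _ e0 (h1 b hb (by simp [hbs]))
      · intro b hb hbs
        have e0 : b ≠ x := by rintro rfl; tauto
        have := h2 b hb (by simp only [List.mem_cons]; tauto)
        simp only [List.mem_cons] at this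
        tauto

lemma Good.sep {n : ℕ} {B : Finset ℕ} (h : Good n B) : Sep B := fun b hb => (h b hb).2

lemma expand_perm {n : ℕ} {B : Finset ℕ} (hB : Good n B) :
    (expand B (keep B (List.range' 1 n))).Perm (List.range' 1 n) := by
  rw [List.perm_ext_iff_of_nodup _ List.nodup_range']
  · intro x
    simp only [expand, keep, List.mem_flatMap, List.mem_filter, decide_eq_true_eq,
      List.mem_range'_1]
    constructor
    · rintro ⟨a, ⟨ha, -⟩, hx⟩
      unfold ex1 at hx
      split_ifs at hx with h
      · have := hB a h
        simp [pat] at hx; omega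
      · simp at hx; omega
    · intro hx
      by_cases hr : R B x
      · obtain ⟨b, hb, hbx⟩ := hr
        refine ⟨b, ⟨?_, not_R hB.sep hb⟩, ?_⟩
        · have := hB b hb; omega
        · simp [ex1, hb, pat]; omega
      · refine ⟨x, ⟨hx, hr⟩, ?_⟩
        unfold ex1; split_ifs <;> simp [pat]
  · unfold expand
    rw [List.nodup_flatMap]
    constructor
    · intro x _
      unfold ex1; split_ifs <;> simp [pat]
    · have hnd : (keep B (List.range' 1 n)).Nodup := List.Nodup.filter _ List.nodup_range'
      refine List.Pairwise.imp_of_mem ?_ hnd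
      intro a b ha hb hab
      have ha : ¬ R B a := by simpa using (List.mem_filter.1 ha).2
      have hb : ¬ R B b := by simpa using (List.mem_filter.1 hb).2
      simp only [Function.onFun, List.disjoint_left]
      intro x hxa hxb
      unfold ex1 at hxa hxb
      split_ifs at hxa hxb with h1 h2 h2
      · have s1 := hB a h1
        have s2 := hB b h2
        simp only [pat, List.mem_cons, List.not_mem_nil, or_false] at hxa hxb
        have k1 : b ≠ a + 1 := by rintro rfl; tauto
        have k2 : b ≠ a + 2 := by rintro rfl; tauto
        have k3 : a ≠ b + 1 := by rintro rfl; tauto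
        have k4 : a ≠ b + 2 := by rintro rfl; tauto
        omega
      · simp only [pat, List.mem_cons, List.not_mem_nil, or_false] at hxa hxb
        subst hxb
        exact hb ⟨a, h1, by omega⟩
      · simp only [pat, List.mem_cons, List.not_mem_nil, or_false] at hxa hxb
        subst hxa
        exact ha ⟨b, h2, by omega⟩
      · simp at hxa hxb; omega

lemma length_expand (B : Finset ℕ) (m : List ℕ) (hm : m.Nodup) (hBm : ∀ b ∈ B, b ∈ m) :
    (expand B m).length = m.length + 2 * B.card := by
  have h : ∀ m : List ℕ, (expand B m).length
      = m.length + 2 * (m.filter (fun x => decide (x ∈ B))).length := by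
    intro m
    induction m with
    | nil => rfl
    | cons x t ih =>
      simp only [expand, List.flatMap_cons, List.length_append] at ih ⊢
      rw [ih]
      by_cases hx : x ∈ B
      · simp [ex1, hx, pat]; omega
      · simp [ex1, hx]; omega
  rw [h, ← List.toFinset_card_of_nodup (hm.filter _)]
  congr 3
  ext x
  simp only [List.mem_toFinset, List.mem_filter, decide_eq_true_eq]
  exact ⟨fun h => h.2, fun h => ⟨hBm x h, h⟩⟩

def P (n : ℕ) : Finset (List ℕ) := (List.range' 1 n).permutations.toFinset

lemma mem_P {n : ℕ} {l : List ℕ} : l ∈ P n ↔ l.Perm (List.range' 1 n) := by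
  simp [P]

lemma N_card {n : ℕ} {B : Finset ℕ} (hB : Good n B) :
    ((P n).filter (fun l => ∀ b ∈ B, pat b <:+: l)).card = (n - 2 * B.card).factorial := by
  set V := keep B (List.range' 1 n) with hV
  have hVnd : V.Nodup := List.Nodup.filter _ List.nodup_range'
  have hBV : ∀ b ∈ B, b ∈ V := by
    intro b hb
    simp only [hV, keep, List.mem_filter, List.mem_range'_1, decide_eq_true_eq]
    have := hB b hb
    exact ⟨by omega, not_R hB.sep hb⟩
  have hVR : ∀ m : List ℕ, m.Perm V → ∀ x ∈ m, ¬ R B x := by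
    intro m hm x hx
    have := hm.mem_iff.1 hx
    simp only [hV, keep, List.mem_filter, decide_eq_true_eq] at this
    exact this.2
  have hlen : V.length = n - 2 * B.card := by
    have h1 := length_expand B V hVnd hBV
    have h2 := (expand_perm hB).length_eq
    rw [← hV] at h2
    simp at h2
    omega
  have himg : (P n).filter (fun l => ∀ b ∈ B, pat b <:+: l)
      = V.permutations.toFinset.image (expand B) := by
    ext l
    simp only [Finset.mem_filter, mem_P, Finset.mem_image, List.mem_toFinset,
      List.mem_permutations]
    constructor
    · rintro ⟨hl, h⟩
      refine ⟨keep B l, hl.filter _, ?_⟩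
      refine expand_keep hB.sep l.length l le_rfl (hl.nodup_iff.2 List.nodup_range')
        (fun b hb _ => h b hb) (fun b hb _ => (mem_of_pat (h b hb)).1)
    · rintro ⟨m, hm, rfl⟩
      refine ⟨(hm.flatMap_right _).trans (expand_perm hB), ?_⟩
      intro b hb
      obtain ⟨s, t, rfl⟩ := List.append_of_mem (hm.mem_iff.2 (hBV b hb))
      refine ⟨expand B s, expand B t, ?_⟩
      simp [expand, ex1, hb]
  rw [himg, Finset.card_image_of_injOn, List.toFinset_card_of_nodup (List.nodup_permutations _ hVnd),
    List.length_permutations, hlen]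
  intro m hm m' hm' h
  simp only [Finset.mem_coe, List.mem_toFinset, List.mem_permutations] at hm hm'
  rw [← keep_expand hB.sep m (hVR m hm), ← keep_expand hB.sep m' (hVR m' hm'), h]

def Occ (n : ℕ) (l : List ℕ) : Finset ℕ := (Finset.range (n+1)).filter (fun b => pat b <:+: l)

lemma avoids_iff {n : ℕ} {l : List ℕ} (hl : l.Perm (List.range' 1 n)) :
    Avoids132 l ↔ Occ n l = ∅ := by
  have hpos : ∀ i, i < l.length ↔ l.getD i 0 ≠ 0 := by
    intro i
    constructor
    · intro hi
      have := hl.mem_iff.1 (List.getElem_mem hi)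
      rw [List.mem_range'_1] at this
      rw [List.getD_eq_getElem _ _ hi]; omega
    · intro h
      by_contra hi
      exact h (List.getD_eq_default _ _ (by omega))
  constructor
  · intro h
    rw [Finset.eq_empty_iff_forall_notMem]
    intro b hb
    obtain ⟨s, t, hst⟩ := (Finset.mem_filter.1 hb).2
    refine h s.length ?_ ?_
    · rw [← hst]; simp [pat]
    · rw [← hst]
      simp [pat, List.getD_append_right]
  · intro h i hi hh
    have h1 := (hpos (i+1)).2 (by omega)
    have h2 := (hpos (i+2)).2 (by omega)
    rw [List.getD_eq_getElem _ _ hi, List.getD_eq_getElem _ _ h1, List.getD_eq_getElem _ _ h2] at hh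
    have hp : pat l[i] <:+: l := by
      refine ⟨l.take i, l.drop (i+3), ?_⟩
      conv_rhs => rw [← List.take_append_drop i l, List.drop_eq_getElem_cons hi,
        List.drop_eq_getElem_cons h1, List.drop_eq_getElem_cons h2]
      simp [pat, hh.1, hh.2]
    have : l[i] ∈ Occ n l := by
      refine Finset.mem_filter.2 ⟨?_, hp⟩
      have := hl.mem_iff.1 (List.getElem_mem hi)
      rw [List.mem_range'_1] at this
      simp; omega
    rw [h] at this
    simp at this

lemma sum_G (n : ℕ) : ((((P n).filter (fun l => Avoids132 l)).card : ℕ) : ℤ) =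
    ∑ B ∈ (Finset.range (n+1)).powerset with Good n B,
      (-1 : ℤ) ^ B.card * ((n - 2 * B.card).factorial : ℤ) := by
  have step1 : ((((P n).filter (fun l => Avoids132 l)).card : ℕ) : ℤ) =
      ∑ l ∈ P n, ∑ B ∈ (Finset.range (n+1)).powerset,
        if (∀ b ∈ B, pat b <:+: l) then (-1 : ℤ) ^ B.card else 0 := by
    rw [Finset.card_filter]
    push_cast
    refine Finset.sum_congr rfl fun l hl => ?_
    rw [← Finset.sum_filter]
    have : (Finset.range (n+1)).powerset.filter (fun B => ∀ b ∈ B, pat b <:+: l)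
        = (Occ n l).powerset := by
      ext B
      simp only [Finset.mem_filter, Finset.mem_powerset, Occ, Finset.subset_iff]
      exact ⟨fun h b hb => ⟨h.1 hb, h.2 b hb⟩, fun h => ⟨fun b hb => (h hb).1, fun b hb => (h hb).2⟩⟩
    rw [this, Finset.sum_powerset_neg_one_pow_card]
    simp only [avoids_iff (mem_P.1 hl)]
  rw [step1, Finset.sum_comm, Finset.sum_filter]
  refine Finset.sum_congr rfl fun B _ => ?_
  rw [← Finset.sum_filter, Finset.sum_const, nsmul_eq_mul]
  split_ifs with hB
  · rw [N_card hB, mul_comm]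
  · have : (P n).filter (fun l => ∀ b ∈ B, pat b <:+: l) = ∅ := by
      rw [Finset.eq_empty_iff_forall_notMem]
      intro l hl
      rw [Finset.mem_filter, mem_P] at hl
      exact hB (good_of_pat hl.1 hl.2)
    rw [this]; simp

end H132

open H132 in
/-- The number of permutations of {1,...,n} avoiding the Hertzsprung pattern 132
equals ∑_{i=0}^{⌊n/3⌋} (-1)^i (n-2i)! C(n-2i, i). -/
theorem stmt_3 (n : ℕ) :
    (((List.range' 1 n).permutations.filter
        (fun l => decide (Avoids132 l))).length : ℤ) =
      ∑ i ∈ Finset.range (n / 3 + 1),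
        (-1 : ℤ) ^ i * (Nat.factorial (n - 2*i)) * (Nat.choose (n - 2*i) i) := by
  have h0 : ((List.range' 1 n).permutations.filter (fun l => decide (Avoids132 l))).length
      = ((P n).filter (fun l => Avoids132 l)).card := by
    rw [← List.toFinset_card_of_nodup
      ((List.nodup_permutations _ List.nodup_range').filter _), List.toFinset_filter]
    simp [P]
  rw [h0, sum_G]
  have hcard : ∀ B ∈ (Finset.range (n+1)).powerset.filter (Good n),
      B.card ∈ Finset.range (n / 3 + 1) := by
    intro B hB
    have hG : B ∈ G n B.card := mem_G.2 ⟨(Finset.mem_filter.1 hB).2, rfl⟩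
    have hpos := Finset.card_pos.2 ⟨B, hG⟩
    rw [G_card] at hpos
    have : B.card ≤ n - 2 * B.card := by
      by_contra hlt
      rw [Nat.choose_eq_zero_of_lt (by omega)] at hpos
      omega
    rw [Finset.mem_range]; omega
  rw [← Finset.sum_fiberwise_of_maps_to hcard]
  refine Finset.sum_congr rfl fun i _ => ?_
  rw [Finset.filter_filter]
  change ∑ B ∈ G n i, _ = _
  rw [Finset.sum_congr rfl (g := fun _ => (-1 : ℤ) ^ i * ((n - 2 * i).factorial : ℤ))]
  · rw [Finset.sum_const, G_card, nsmul_eq_mul]; ring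
  · intro B hB
    rw [(mem_G.1 hB).2]
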